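/- Let X be a complex separable infinite-dimensional Banach space and let T be a bounded linear operator on X. Suppose there exists a sequence (u_i)_{i≥1} of vectors of X such that: (a) for each i ≥ 1, u_i is an eigenvector of T associated to an eigenvalue λ_i with |λ_i| = 1, and the λ_i are pairwise distinct; (b) the linear span of {u_i : i ≥ 1} is dense in X; (c) for every i ≥ 1 and every ε > 0 there exists n ≠ i with ‖u_n − u_i‖ < ε. Then T has a perfectly spanning set of eigenvectors associated to unimodular eigenvalues, and hence T is frequently hypercyclic. -/

import Mathlib

open MeasureTheory Filter Topology

open scoped Classical in
/-- Lower density of a set of natural numbers. -/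
noncomputable def lowerDensity (A : Set ℕ) : ℝ :=
  Filter.atTop.liminf fun N : ℕ =>
    (((Finset.range N).filter (fun n => n ∈ A)).card : ℝ) / (N : ℝ)

/-- `x` is a frequently hypercyclic vector for `T`. -/
def FreqHCVector {X : Type*} [NormedAddCommGroup X] [NormedSpace ℂ X]
    (T : X →L[ℂ] X) (x : X) : Prop :=
  ∀ U : Set X, IsOpen U → U.Nonempty → 0 < lowerDensity {n : ℕ | (T ^ n) x ∈ U}

/-- `T` is frequently hypercyclic. -/
def FrequentlyHypercyclic {X : Type*} [NormedAddCommGroup X] [NormedSpace ℂ X]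
    (T : X →L[ℂ] X) : Prop :=
  ∃ x : X, FreqHCVector T x

/-- `T` is hypercyclic. -/
def Hypercyclic {X : Type*} [NormedAddCommGroup X] [NormedSpace ℂ X]
    (T : X →L[ℂ] X) : Prop :=
  ∃ x : X, Dense (Set.range fun n : ℕ => (T ^ n) x)

/-- `T` has a perfectly spanning set of eigenvectors associated to unimodular
eigenvalues: there is a continuous (atomless) probability measure `σ` on the unit
circle such that whenever `A` is a measurable subset of the circle with `σ A = 1`,
the span of the eigenspaces `ker (T - c)`, `c ∈ A`, is dense in `X`. -/
def PerfectlySpanning {X : Type*} [NormedAddCommGroup X] [NormedSpace ℂ X]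
    (T : X →L[ℂ] X) : Prop :=
  ∃ σ : Measure ℂ, IsProbabilityMeasure σ ∧ (∀ c : ℂ, σ {c} = 0) ∧
    σ {c : ℂ | ‖c‖ = 1} = 1 ∧
    ∀ A : Set ℂ, A ⊆ {c : ℂ | ‖c‖ = 1} → MeasurableSet A → σ A = 1 →
      Dense (Submodule.span ℂ (⋃ c ∈ A, {x : X | T x = c • x}) : Set X)

/-!
Let `Y` be the closure of `{u i}` with `0` removed. Every point of `Y` is a unimodular eigenvector,
and since the circle is compact its eigenvalue depends continuously on the point. Because each
`u i` is a limit of eigenvectors with other eigenvalues, the eigenvalue map is not constant on any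
nonempty open subset of `Y`. A Cantor scheme then places in every open set a copy of Cantor space
on which the eigenvalue map is injective; summing the corresponding measures gives a measure with
full support on `Y` whose image on the circle is atomless, and that image is perfectly spanning.

For frequent hypercyclicity, an atomless measure ignores countable sets, so one may keep only
eigenvectors `x` such that every ball around `x` meets eigenspaces for infinitely many eigenvalues.
Averaging many eigenvectors close to `x` produces a vector close to `x` whose orbit has small
Cesàro means, because the exponential sums `∑ z ^ n` cancel in mean square. A frequently
hypercyclic vector is a series of such averages: orbits of finite sums of unimodular eigenvectors
are almost periodic, so the partial sums hit their targets along syndetic sets, and the tails are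
too small in mean to spoil more than a fraction of these hitting times.
-/

section Syndetic

/-- `S` meets every interval of `L + 1` consecutive natural numbers. The gap bound `L` is kept
explicit because the density estimates below depend on it. -/
def SyndeticWith (L : ℕ) (S : Set ℕ) : Prop :=
  ∀ a, ∃ n ∈ S, a ≤ n ∧ n ≤ a + L

lemma exists_syndeticWith_pow_mem {G : Type*} [Group G] [TopologicalSpace G]
    [IsTopologicalGroup G] [CompactSpace G] (g : G) {U : Set G} (hU : U ∈ 𝓝 1) :
    ∃ L, SyndeticWith L {n | g ^ n ∈ U} := by
  have horbit : closure (Set.range fun n : ℕ ↦ g ^ n) ⊆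
      ⋃ n : ℕ, (fun x ↦ x * (g ^ n)⁻¹) ⁻¹' interior U := by
    intro x hx
    have hnhds : (fun y ↦ x * y⁻¹) ⁻¹' interior U ∈ 𝓝 x :=
      ContinuousAt.preimage_mem_nhds (by fun_prop) (by simpa using hU)
    obtain ⟨_, hy, n, rfl⟩ := mem_closure_iff_nhds.1 hx _ hnhds
    exact Set.mem_iUnion.2 ⟨n, hy⟩
  obtain ⟨s, hs⟩ := isClosed_closure.isCompact.elim_finite_subcover _
    (fun n ↦ isOpen_interior.preimage (by fun_prop)) horbit
  refine ⟨s.sup id, fun a ↦ ?_⟩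
  obtain ⟨n, hn, hmem⟩ := Set.mem_iUnion₂.1 (hs (subset_closure ⟨a + s.sup id, rfl⟩))
  have hle : n ≤ s.sup id := Finset.le_sup (f := id) hn
  refine ⟨a + s.sup id - n, ?_, by omega, by omega⟩
  rw [Set.mem_ofPred_eq, pow_sub g (by omega)]
  exact interior_subset hmem

lemma exists_syndeticWith_pow_mem_of_mem_nhds_inv_pow {G : Type*} [Group G] [TopologicalSpace G]
    [IsTopologicalGroup G] [CompactSpace G] (g : G) (m : ℕ) {U : Set G} (hU : U ∈ 𝓝 (g ^ m)⁻¹) :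
    ∃ L, SyndeticWith L {n | g ^ n ∈ U} := by
  have hshift : (fun x ↦ x * (g ^ m)⁻¹) ⁻¹' U ∈ 𝓝 1 :=
    ContinuousAt.preimage_mem_nhds (by fun_prop) (by simpa using hU)
  obtain ⟨L, hL⟩ := exists_syndeticWith_pow_mem g hshift
  refine ⟨L, fun a ↦ ?_⟩
  obtain ⟨p, hp, hap, hpL⟩ := hL (a + m)
  refine ⟨p - m, ?_, by omega, by omega⟩
  rwa [Set.mem_ofPred_eq, pow_sub g (by omega : m ≤ p)]

lemma SyndeticWith.le_sum_indicator {L : ℕ} {S : Set ℕ} (hS : SyndeticWith L S) (N : ℕ) :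
    (N : ℝ) / (L + 1) - 1 ≤ ∑ n ∈ Finset.range N, S.indicator 1 n := by
  have hnonneg : ∀ n, 0 ≤ S.indicator (1 : ℕ → ℝ) n :=
    Set.indicator_nonneg fun _ _ ↦ zero_le_one
  have hblocks : ∀ k : ℕ, (k : ℝ) ≤ ∑ n ∈ Finset.range (k * (L + 1)), S.indicator 1 n := by
    intro k
    induction k with
    | zero => simp
    | succ k ih =>
      obtain ⟨n, hnS, hkn, hnk⟩ := hS (k * (L + 1))
      have hblock : 1 ≤ ∑ i ∈ Finset.range (L + 1), S.indicator (1 : ℕ → ℝ) (k * (L + 1) + i) := by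
        refine le_trans ?_ (Finset.single_le_sum (fun i _ ↦ hnonneg _)
          (Finset.mem_range.2 (by omega : n - k * (L + 1) < L + 1)))
        simp [Nat.add_sub_cancel' hkn, hnS]
      rw [add_mul, one_mul, Finset.sum_range_add]
      push_cast
      linarith
  have hfloor : (N : ℝ) / (L + 1) < (N / (L + 1) : ℕ) + 1 := by
    rw [div_lt_iff₀ (by positivity)]
    exact_mod_cast (Nat.lt_div_mul_add L.succ_pos).trans_eq (Nat.succ_mul _ _).symm
  have hmono : ∑ n ∈ Finset.range (N / (L + 1) * (L + 1)), S.indicator (1 : ℕ → ℝ) n ≤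
      ∑ n ∈ Finset.range N, S.indicator 1 n :=
    Finset.sum_le_sum_of_subset_of_nonneg
      (Finset.range_subset_range.2 (Nat.div_mul_le_self _ _)) fun n _ _ ↦ hnonneg n
  linarith [hblocks (N / (L + 1))]

/-- A maximal inequality: if it failed, bad intervals starting in `S` would cover a fixed
proportion of `ℕ`. -/
lemma SyndeticWith.exists_forall_sum_add_le {L : ℕ} {S : Set ℕ} (hS : SyndeticWith L S)
    {f : ℕ → ℝ} (hf : ∀ n, 0 ≤ f n) {ε α : ℝ} (hα : 0 ≤ α) (hεα : ε * (L + 1) < α)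
    (hmean : ∀ᶠ N : ℕ in atTop, ∑ n ∈ Finset.range N, f n ≤ ε * N) :
    ∃ m ∈ S, ∀ N : ℕ, ∑ n ∈ Finset.range N, f (m + n) ≤ α * N := by
  by_contra! hbad
  have hcover : ∀ k : ℕ, ∃ a ≥ k, α * a ≤ (∑ n ∈ Finset.range a, f n) * (L + 1) := by
    intro k
    induction k with
    | zero => exact ⟨0, le_rfl, by simp⟩
    | succ k ih =>
      obtain ⟨a, hka, ha⟩ := ih
      obtain ⟨m, hmS, ham, hmL⟩ := hS a
      obtain ⟨N, hN⟩ := hbad m hmS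
      have hNpos : 0 < N := Nat.pos_of_ne_zero fun h ↦ by simp [h] at hN
      have hlen : ((m + N : ℕ) : ℝ) ≤ a + N * (L + 1) := by
        exact_mod_cast (by nlinarith : m + N ≤ a + N * (L + 1))
      have hprefix : ∑ n ∈ Finset.range a, f n ≤ ∑ n ∈ Finset.range m, f n :=
        Finset.sum_le_sum_of_subset_of_nonneg (Finset.range_subset_range.2 ham) fun n _ _ ↦ hf n
      refine ⟨m + N, by omega, ?_⟩
      calc α * (m + N : ℕ) ≤ α * a + α * N * (L + 1) := by
            linarith [mul_le_mul_of_nonneg_left hlen hα]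
        _ ≤ (∑ n ∈ Finset.range m, f n) * (L + 1) +
            (∑ n ∈ Finset.range N, f (m + n)) * (L + 1) :=
          add_le_add (ha.trans (by gcongr)) (by gcongr)
        _ = (∑ n ∈ Finset.range (m + N), f n) * (L + 1) := by
            rw [Finset.sum_range_add, add_mul]
  obtain ⟨K, hK⟩ := eventually_atTop.1 hmean
  obtain ⟨a, hKa, ha⟩ := hcover (K + 1)
  have hapos : (0 : ℝ) < a := by exact_mod_cast (by omega : 0 < a)
  have hsmall : (∑ n ∈ Finset.range a, f n) * (L + 1) ≤ ε * a * (L + 1) := by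
    gcongr
    exact hK a (by omega)
  nlinarith

end Syndetic

section LowerDensity

lemma lowerDensity_eq_liminf_sum_indicator (A : Set ℕ) :
    lowerDensity A =
      atTop.liminf fun N : ℕ ↦ (∑ n ∈ Finset.range N, A.indicator (1 : ℕ → ℝ) n) / N := by
  classical
  simp only [lowerDensity, Finset.card_filter, Nat.cast_sum, Nat.cast_ite, Nat.cast_one,
    Nat.cast_zero, Set.indicator_apply, Pi.one_apply]

lemma sum_indicator_div_mem_Icc (A : Set ℕ) (N : ℕ) :
    (∑ n ∈ Finset.range N, A.indicator (1 : ℕ → ℝ) n) / N ∈ Set.Icc 0 1 := by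
  refine ⟨div_nonneg (Finset.sum_nonneg fun n _ ↦ Set.indicator_nonneg (by simp) n)
    N.cast_nonneg, div_le_one_of_le₀ ?_ N.cast_nonneg⟩
  calc ∑ n ∈ Finset.range N, A.indicator (1 : ℕ → ℝ) n ≤ ∑ n ∈ Finset.range N, 1 :=
        Finset.sum_le_sum fun n _ ↦ Set.indicator_le_self' (by simp) n
    _ = N := by simp

lemma lowerDensity_mono {A B : Set ℕ} (hAB : A ⊆ B) : lowerDensity A ≤ lowerDensity B := by
  simp only [lowerDensity_eq_liminf_sum_indicator]
  refine liminf_le_liminf (Eventually.of_forall fun N ↦ ?_)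
    (isBoundedUnder_of ⟨0, fun N ↦ (sum_indicator_div_mem_Icc A N).1⟩)
    (isBoundedUnder_of ⟨1, fun N ↦ (sum_indicator_div_mem_Icc B N).2⟩).isCoboundedUnder_ge
  gcongr
  simp

lemma lowerDensity_pos_of_mul_sub_le {A : Set ℕ} {c d : ℝ} (hc : 0 < c)
    (hA : ∀ N : ℕ, c * N - d ≤ ∑ n ∈ Finset.range N, A.indicator 1 n) : 0 < lowerDensity A := by
  refine (half_pos hc).trans_le ?_
  rw [lowerDensity_eq_liminf_sum_indicator]
  refine le_liminf_of_le
    (isBoundedUnder_of ⟨1, fun N ↦ (sum_indicator_div_mem_Icc A N).2⟩).isCoboundedUnder_ge ?_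
  filter_upwards [eventually_ge_atTop (max 1 ⌈2 * d / c⌉₊)] with N hN
  have hNpos : (0 : ℝ) < N := by exact_mod_cast (le_max_left _ _).trans hN
  have hNd : 2 * d ≤ N * c := (div_le_iff₀ hc).1 (Nat.ceil_le.1 ((le_max_right _ _).trans hN))
  rw [le_div_iff₀ hNpos]
  linarith [hA N]

lemma SyndeticWith.lowerDensity_sep_pos {L : ℕ} {S : Set ℕ} (hS : SyndeticWith L S)
    {f : ℕ → ℝ} (hf : ∀ n, 0 ≤ f n) {α r : ℝ} (hr : 0 < r) (hαr : α * (L + 1) < r)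
    (hmean : ∀ N : ℕ, ∑ n ∈ Finset.range N, f n ≤ α * N) :
    0 < lowerDensity {n ∈ S | f n < r} := by
  refine lowerDensity_pos_of_mul_sub_le (c := 1 / (L + 1) - α / r) (d := 1) ?_ fun N ↦ ?_
  · rw [sub_pos, div_lt_div_iff₀ hr (by positivity)]
    linarith
  · have hmarkov : ∀ n, S.indicator (1 : ℕ → ℝ) n ≤
        {n ∈ S | f n < r}.indicator 1 n + f n / r := by
      intro n
      have hfr : 0 ≤ f n / r := div_nonneg (hf n) hr.le
      by_cases hn : n ∈ S
      · rcases lt_or_ge (f n) r with hfn | hfn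
        · simpa [hn, hfn] using hfr
        · simpa [hn, hfn.not_gt] using (one_le_div hr).2 hfn
      · simpa [hn] using hfr
    have hsum := Finset.sum_le_sum fun n (_ : n ∈ Finset.range N) ↦ hmarkov n
    rw [Finset.sum_add_distrib, ← Finset.sum_div] at hsum
    have hmeanr : (∑ n ∈ Finset.range N, f n) / r ≤ α * N / r := by gcongr; exact hmean N
    calc (1 / (L + 1) - α / r) * N - 1 = N / (L + 1) - 1 - α * N / r := by ring
      _ ≤ _ := by linarith [hS.le_sum_indicator N]

end LowerDensity

section Circle

lemma norm_sum_range_pow_le {c : Circle} (hc : c ≠ 1) (N : ℕ) :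
    ‖∑ n ∈ Finset.range N, (c : ℂ) ^ n‖ ≤ 2 / ‖(c : ℂ) - 1‖ := by
  rw [geom_sum_eq (Circle.coe_eq_one.not.2 hc), norm_div]
  gcongr
  calc ‖(c : ℂ) ^ N - 1‖ ≤ ‖(c : ℂ) ^ N‖ + ‖(1 : ℂ)‖ := norm_sub_le _ _
    _ = 2 := by rw [norm_pow, Circle.norm_coe, one_pow, norm_one, one_add_one_eq_two]

lemma ofReal_norm_sum_pow_sq (s : Finset Circle) (n : ℕ) :
    ((‖∑ z ∈ s, (z : ℂ) ^ n‖ ^ 2 : ℝ) : ℂ) = ∑ p ∈ s ×ˢ s, ((p.1 / p.2 : Circle) : ℂ) ^ n := by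
  rw [Complex.ofReal_pow, ← Complex.mul_conj', map_sum, Finset.sum_mul_sum, Finset.sum_product]
  simp only [map_pow, ← Circle.coe_inv_eq_conj, ← mul_pow, ← Circle.coe_mul, div_eq_mul_inv]

lemma exists_sum_norm_sum_pow_sq_le (s : Finset Circle) :
    ∃ C : ℝ, ∀ N : ℕ,
      ∑ n ∈ Finset.range N, ‖∑ z ∈ s, (z : ℂ) ^ n‖ ^ 2 ≤ s.card * N + C := by
  classical
  refine ⟨∑ p ∈ s.offDiag, 2 / ‖((p.1 / p.2 : Circle) : ℂ) - 1‖, fun N ↦ ?_⟩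
  have hdiag : ∑ p ∈ s.diag, ‖∑ n ∈ Finset.range N, ((p.1 / p.2 : Circle) : ℂ) ^ n‖ =
      s.card * N := by
    simp [Finset.sum_diag]
  have hoff : ∀ p ∈ s.offDiag, ‖∑ n ∈ Finset.range N, ((p.1 / p.2 : Circle) : ℂ) ^ n‖ ≤
      2 / ‖((p.1 / p.2 : Circle) : ℂ) - 1‖ := fun p hp ↦
    norm_sum_range_pow_le (div_ne_one.2 (Finset.mem_offDiag.1 hp).2.2) N
  have hexpand : ((∑ n ∈ Finset.range N, ‖∑ z ∈ s, (z : ℂ) ^ n‖ ^ 2 : ℝ) : ℂ) =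
      ∑ p ∈ s ×ˢ s, ∑ n ∈ Finset.range N, ((p.1 / p.2 : Circle) : ℂ) ^ n := by
    rw [Finset.sum_comm, Complex.ofReal_sum]
    exact Finset.sum_congr rfl fun n _ ↦ ofReal_norm_sum_pow_sq s n
  calc ∑ n ∈ Finset.range N, ‖∑ z ∈ s, (z : ℂ) ^ n‖ ^ 2
      = ‖((∑ n ∈ Finset.range N, ‖∑ z ∈ s, (z : ℂ) ^ n‖ ^ 2 : ℝ) : ℂ)‖ :=
        (Complex.norm_of_nonneg (by positivity)).symm
    _ ≤ ∑ p ∈ s ×ˢ s, ‖∑ n ∈ Finset.range N, ((p.1 / p.2 : Circle) : ℂ) ^ n‖ :=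
        hexpand ▸ norm_sum_le _ _
    _ ≤ s.card * N + ∑ p ∈ s.offDiag, 2 / ‖((p.1 / p.2 : Circle) : ℂ) - 1‖ := by
        rw [← Finset.diag_union_offDiag, Finset.sum_union (Finset.disjoint_diag_offDiag s), hdiag]
        gcongr with p hp
        exact hoff p hp

lemma eventually_sum_norm_sum_pow_sq_le {s : Finset Circle} (hs : s.Nonempty) :
    ∀ᶠ N : ℕ in atTop,
      (∑ n ∈ Finset.range N, ‖∑ z ∈ s, (z : ℂ) ^ n‖) ^ 2 ≤ 2 * s.card * (N : ℝ) ^ 2 := by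
  obtain ⟨C, hC⟩ := exists_sum_norm_sum_pow_sq_le s
  filter_upwards [eventually_ge_atTop ⌈C⌉₊] with N hN
  have hsN : (N : ℝ) ≤ s.card * N :=
    le_mul_of_one_le_left N.cast_nonneg (by exact_mod_cast hs.card_pos)
  calc (∑ n ∈ Finset.range N, ‖∑ z ∈ s, (z : ℂ) ^ n‖) ^ 2
      ≤ N * ∑ n ∈ Finset.range N, ‖∑ z ∈ s, (z : ℂ) ^ n‖ ^ 2 := by
        simpa using sq_sum_le_card_mul_sum_sq (s := Finset.range N)
          (f := fun n ↦ ‖∑ z ∈ s, (z : ℂ) ^ n‖)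
    _ ≤ N * (s.card * N + s.card * N) := by
        gcongr
        linarith [hC N, Nat.ceil_le.1 hN]
    _ = 2 * s.card * (N : ℝ) ^ 2 := by ring

lemma eventually_sum_norm_sum_pow_mul_le {s : Finset Circle} (hs : s.Nonempty) {a δ : ℝ}
    (hδ : 0 ≤ δ) (ha : 2 * a ^ 2 ≤ s.card * δ ^ 2) :
    ∀ᶠ N : ℕ in atTop,
      (∑ n ∈ Finset.range N, ‖∑ z ∈ s, (z : ℂ) ^ n‖) * a ≤ δ * N * s.card := by
  filter_upwards [eventually_sum_norm_sum_pow_sq_le hs] with N hN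
  refine le_of_sq_le_sq ?_ (by positivity)
  calc ((∑ n ∈ Finset.range N, ‖∑ z ∈ s, (z : ℂ) ^ n‖) * a) ^ 2
      ≤ 2 * s.card * N ^ 2 * a ^ 2 := by rw [mul_pow]; gcongr
    _ = s.card * N ^ 2 * (2 * a ^ 2) := by ring
    _ ≤ s.card * N ^ 2 * (s.card * δ ^ 2) := by gcongr
    _ = (δ * N * s.card) ^ 2 := by ring

end Circle

lemma summable_and_tsum_le_two_mul_of_le_half {d : ℕ → ℝ} (hd : ∀ k, 0 ≤ d k)
    (hhalf : ∀ k, d (k + 1) ≤ 1 / 2 * d k) : Summable d ∧ ∑' k, d k ≤ 2 * d 0 := by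
  have hgeom : ∀ k, d k ≤ (1 / 2) ^ k * d 0 := fun k ↦
    le_geom one_half_pos.le k fun l _ ↦ hhalf l
  have hsum : Summable fun k ↦ (1 / 2 : ℝ) ^ k * d 0 := summable_geometric_two.mul_right _
  have hdsum : Summable d := .of_nonneg_of_le hd hgeom hsum
  refine ⟨hdsum, (hdsum.tsum_le_tsum hgeom hsum).trans_eq ?_⟩
  rw [tsum_mul_right, tsum_geometric_two]

section UnimodularEigenvectors

variable {X : Type*} [NormedAddCommGroup X] [NormedSpace ℂ X] {T : X →L[ℂ] X}

lemma pow_apply_eq_pow_smul {c : ℂ} {x : X} (hx : T x = c • x) (n : ℕ) :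
    (T ^ n) x = c ^ n • x := by
  induction n with
  | zero => simp
  | succ n ih =>
    rw [pow_succ', mul_apply_eq_comp, ih, map_smul, hx, smul_smul, pow_succ]

variable (T) in
/-- The linear span of all eigenvectors of `T` with unimodular eigenvalue. -/
def unimodularEigenspan : Submodule ℂ X :=
  Submodule.span ℂ {x | ∃ c : Circle, T x = (c : ℂ) • x}

lemma pow_apply_mem_unimodularEigenspan (m : ℕ) {x : X} (hx : x ∈ unimodularEigenspan T) :
    (T ^ m) x ∈ unimodularEigenspan T := by
  induction hx using Submodule.span_induction with
  | mem x hx =>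
    obtain ⟨c, hc⟩ := hx
    rw [pow_apply_eq_pow_smul hc]
    exact Submodule.smul_mem _ _ (Submodule.subset_span ⟨c, hc⟩)
  | zero => simp
  | add x y _ _ hx hy => simpa using Submodule.add_mem _ hx hy
  | smul a x _ hx => simpa using Submodule.smul_mem _ a hx

lemma exists_continuousMap_id_pow_eq_pow_apply {x : X} (hx : x ∈ unimodularEigenspan T) :
    ∃ Φ : C(Circle → Circle, X), ∀ n : ℕ, Φ (id ^ n) = (T ^ n) x := by
  induction hx using Submodule.span_induction with
  | mem x hx =>
    obtain ⟨c, hc⟩ := hx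
    refine ⟨⟨fun θ ↦ (θ c : ℂ) • x, by fun_prop⟩, fun n ↦ ?_⟩
    simp [pow_apply_eq_pow_smul hc]
  | zero => exact ⟨0, by simp⟩
  | add x y _ _ hx hy =>
    obtain ⟨Φ, hΦ⟩ := hx
    obtain ⟨Ψ, hΨ⟩ := hy
    exact ⟨Φ + Ψ, by simp [hΦ, hΨ]⟩
  | smul a x _ hx =>
    obtain ⟨Φ, hΦ⟩ := hx
    exact ⟨a • Φ, by simp [hΦ]⟩

variable (T) in
/-- The vectors that can be approximated by `b` in the span of the unimodular eigenvectors whose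
orbit has arbitrarily small Cesàro means `N⁻¹ * ∑ n < N, ‖T ^ n b‖`. -/
def meanNullApproximable : Submodule ℂ X where
  carrier := {x | ∀ ε > (0 : ℝ), ∃ b ∈ unimodularEigenspan T, ‖b - x‖ < ε ∧
    ∀ᶠ N : ℕ in atTop, ∑ n ∈ Finset.range N, ‖(T ^ n) b‖ ≤ ε * N}
  zero_mem' ε hε := ⟨0, zero_mem _, by simpa using hε, Eventually.of_forall fun N ↦ by
    simpa using mul_nonneg hε.le N.cast_nonneg⟩
  add_mem' {x y} hx hy ε hε := by
    obtain ⟨b, hb, hbx, hbmean⟩ := hx (ε / 2) (half_pos hε)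
    obtain ⟨c, hc, hcy, hcmean⟩ := hy (ε / 2) (half_pos hε)
    refine ⟨b + c, add_mem hb hc, ?_, ?_⟩
    · rw [add_sub_add_comm]
      linarith [norm_add_le (b - x) (c - y)]
    · filter_upwards [hbmean, hcmean] with N hbN hcN
      calc ∑ n ∈ Finset.range N, ‖(T ^ n) (b + c)‖
          ≤ ∑ n ∈ Finset.range N, (‖(T ^ n) b‖ + ‖(T ^ n) c‖) :=
            Finset.sum_le_sum fun n _ ↦ by rw [map_add]; exact norm_add_le _ _
        _ ≤ ε * N := by rw [Finset.sum_add_distrib]; linarith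
  smul_mem' a x hx ε hε := by
    have ha : 0 < ‖a‖ + 1 := by positivity
    have hscale : ‖a‖ * (ε / (‖a‖ + 1)) < ε := by
      rw [mul_div_assoc', div_lt_iff₀ ha]
      linarith
    obtain ⟨b, hb, hbx, hbmean⟩ := hx (ε / (‖a‖ + 1)) (div_pos hε ha)
    refine ⟨a • b, Submodule.smul_mem _ a hb, ?_, ?_⟩
    · rw [← smul_sub, norm_smul]
      exact (mul_le_mul_of_nonneg_left hbx.le (norm_nonneg a)).trans_lt hscale
    · filter_upwards [hbmean] with N hN
      calc ∑ n ∈ Finset.range N, ‖(T ^ n) (a • b)‖ = ‖a‖ * ∑ n ∈ Finset.range N, ‖(T ^ n) b‖ := by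
            simp only [map_smul, norm_smul, Finset.mul_sum]
        _ ≤ ‖a‖ * (ε / (‖a‖ + 1) * N) := by gcongr
        _ = ‖a‖ * (ε / (‖a‖ + 1)) * N := (mul_assoc _ _ _).symm
        _ ≤ ε * N := by gcongr

lemma isClosed_meanNullApproximable : IsClosed (meanNullApproximable T : Set X) := by
  refine isClosed_of_closure_subset fun x hx ε hε ↦ ?_
  obtain ⟨y, hy, hyx⟩ := SeminormedAddCommGroup.mem_closure_iff.1 hx (ε / 2) (half_pos hε)
  obtain ⟨b, hb, hby, hbmean⟩ := hy (ε / 2) (half_pos hε)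
  refine ⟨b, hb, ?_, hbmean.mono fun N hN ↦ hN.trans (by gcongr; linarith)⟩
  linarith [norm_sub_le_norm_sub_add_norm_sub b y x, norm_sub_rev x y]

variable (T) in
/-- The unimodular eigenvalues of `T` that have an eigenvector in `U`; if `0 ∈ U` this is the whole
circle. -/
def unimodularEigenvalues (U : Set X) : Set Circle :=
  {c | ∃ v ∈ U, T v = (c : ℂ) • v}

lemma norm_pow_apply_average_sub_le {s : Finset Circle} (hs : s.Nonempty) {v : Circle → X}
    (hv : ∀ z ∈ s, T (v z) = (z : ℂ) • v z) {x : X} {δ : ℝ} (hvx : ∀ z ∈ s, ‖v z - x‖ ≤ δ)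
    (n : ℕ) :
    ‖(T ^ n) ((s.card : ℂ)⁻¹ • ∑ z ∈ s, v z) - ((s.card : ℂ)⁻¹ * ∑ z ∈ s, (z : ℂ) ^ n) • x‖ ≤
      δ := by
  have hcard : (0 : ℝ) < s.card := by exact_mod_cast hs.card_pos
  have heq : (T ^ n) ((s.card : ℂ)⁻¹ • ∑ z ∈ s, v z) -
      ((s.card : ℂ)⁻¹ * ∑ z ∈ s, (z : ℂ) ^ n) • x =
      (s.card : ℂ)⁻¹ • ∑ z ∈ s, (z : ℂ) ^ n • (v z - x) := by
    rw [map_smul, map_sum, Finset.sum_congr rfl fun z hz ↦ pow_apply_eq_pow_smul (hv z hz) n,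
      mul_smul, Finset.sum_smul, ← smul_sub, ← Finset.sum_sub_distrib]
    simp only [smul_sub]
  rw [heq, norm_smul, norm_inv, Complex.norm_natCast, inv_mul_le_iff₀ hcard, ← nsmul_eq_mul]
  refine norm_sum_le_of_le _ (fun z hz ↦ ?_) |>.trans_eq (Finset.sum_const δ)
  rw [norm_smul, norm_pow, Circle.norm_coe, one_pow, one_mul]
  exact hvx z hz

lemma mem_meanNullApproximable_of_infinite {x : X}
    (hx : ∀ δ > 0, (unimodularEigenvalues T (Metric.ball x δ)).Infinite) :
    x ∈ meanNullApproximable T := by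
  intro ε hε
  obtain ⟨δ, hδpos, rfl⟩ : ∃ δ, 0 < δ ∧ δ + δ = ε := ⟨ε / 2, half_pos hε, add_halves ε⟩
  obtain ⟨s, hsub, hcard⟩ :=
    (hx δ hδpos).exists_subset_card_eq (⌈2 * ‖x‖ ^ 2 / δ ^ 2⌉₊ + 1)
  have hs : s.Nonempty := Finset.card_pos.1 (by omega)
  have hspos : (0 : ℝ) < s.card := by exact_mod_cast hs.card_pos
  have hlarge : 2 * ‖x‖ ^ 2 ≤ s.card * δ ^ 2 := by
    rw [← div_le_iff₀ (by positivity), hcard]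
    exact (Nat.le_ceil _).trans (by norm_cast; omega)
  choose! v hvball hv using fun z (hz : z ∈ s) ↦ hsub hz
  have havg := norm_pow_apply_average_sub_le hs hv (x := x) (δ := δ)
    fun z hz ↦ (mem_ball_iff_norm.1 (hvball z hz)).le
  refine ⟨(s.card : ℂ)⁻¹ • ∑ z ∈ s, v z, Submodule.smul_mem _ _ (Submodule.sum_mem _ fun z hz ↦
    Submodule.subset_span ⟨z, hv z hz⟩), ?_, ?_⟩
  · have hne : (s.card : ℂ) ≠ 0 := by exact_mod_cast hspos.ne'
    have hzero := havg 0
    simp only [pow_zero, Finset.sum_const, nsmul_eq_mul, mul_one, inv_mul_cancel₀ hne, one_smul]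
      at hzero
    exact hzero.trans_lt (lt_add_of_pos_left δ hδpos)
  · filter_upwards [eventually_sum_norm_sum_pow_mul_le hs hδpos.le hlarge] with N hN
    calc ∑ n ∈ Finset.range N, ‖(T ^ n) ((s.card : ℂ)⁻¹ • ∑ z ∈ s, v z)‖
        ≤ ∑ n ∈ Finset.range N, (δ + ‖∑ z ∈ s, (z : ℂ) ^ n‖ * ‖x‖ / s.card) := by
          refine Finset.sum_le_sum fun n _ ↦ (norm_le_norm_sub_add _ _).trans
            (add_le_add (havg n) (le_of_eq ?_))
          rw [norm_smul, norm_mul, norm_inv, Complex.norm_natCast]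
          ring
      _ = δ * N + (∑ n ∈ Finset.range N, ‖∑ z ∈ s, (z : ℂ) ^ n‖) * ‖x‖ / s.card := by
          rw [Finset.sum_add_distrib, ← Finset.sum_div, ← Finset.sum_mul, Finset.sum_const,
            Finset.card_range, nsmul_eq_mul, mul_comm (N : ℝ)]
      _ ≤ δ * N + δ * N := by gcongr; exact (div_le_iff₀ hspos).2 hN
      _ = (δ + δ) * N := (add_mul _ _ _).symm

/-- The orbit of `h` is almost periodic, so the next vector can be steered to `y - h` at times
`m` when `T ^ m h` is close to `h`; shifting it by `T ^ m` makes its Cesàro means small from the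
start. -/
lemma exists_syndeticWith_norm_pow_apply_add_sub_lt (hT : meanNullApproximable T = ⊤) {h : X}
    (hh : h ∈ unimodularEigenspan T) (y : X) {δ ε : ℝ} (hδ : 0 < δ) (hε : 0 < ε) :
    ∃ b ∈ unimodularEigenspan T, ∃ L,
      (∀ N : ℕ, ∑ n ∈ Finset.range N, ‖(T ^ n) b‖ ≤ δ * N) ∧
        SyndeticWith L {n | ‖(T ^ n) (h + b) - y‖ < ε} := by
  obtain ⟨Φ, hΦ⟩ := exists_continuousMap_id_pow_eq_pow_apply hh
  have hΦone : Φ 1 = h := by simpa using hΦ 0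
  have hreturn : {θ : Circle → Circle | ‖Φ θ⁻¹ - h‖ < ε / 2} ∈ 𝓝 1 :=
    (isOpen_lt (by fun_prop) continuous_const).mem_nhds (by simpa [hΦone] using hε)
  obtain ⟨L₀, hL₀⟩ := exists_syndeticWith_pow_mem id hreturn
  have hb₀ : y - h ∈ meanNullApproximable T := hT ▸ Submodule.mem_top
  obtain ⟨b₀, hb₀mem, hb₀y, hb₀mean⟩ :=
    hb₀ (min (ε / 2) (δ / (2 * (L₀ + 1)))) (lt_min (half_pos hε) (by positivity))
  have hsmall : min (ε / 2) (δ / (2 * (L₀ + 1))) * (L₀ + 1) < δ := by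
    calc min (ε / 2) (δ / (2 * (L₀ + 1))) * (L₀ + 1) ≤ δ / (2 * (L₀ + 1)) * (L₀ + 1) := by
          gcongr
          exact min_le_right _ _
      _ = δ / 2 := by field_simp
      _ < δ := half_lt_self hδ
  obtain ⟨m, hmreturn, hm⟩ :=
    hL₀.exists_forall_sum_add_le (fun n ↦ norm_nonneg ((T ^ n) b₀)) hδ.le hsmall hb₀mean
  obtain ⟨Ψ, hΨ⟩ := exists_continuousMap_id_pow_eq_pow_apply hb₀mem
  have hΨone : Ψ 1 = b₀ := by simpa using hΨ 0
  have hhit : {θ : Circle → Circle | ‖Φ θ + Ψ (θ * id ^ m) - y‖ < ε} ∈ 𝓝 (id ^ m)⁻¹ := by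
    refine (isOpen_lt (by fun_prop) continuous_const).mem_nhds ?_
    rw [Set.mem_ofPred_eq, inv_mul_cancel, hΨone,
      show Φ (id ^ m)⁻¹ + b₀ - y = (Φ (id ^ m)⁻¹ - h) + (b₀ - (y - h)) by abel]
    rw [Set.mem_ofPred_eq, Set.mem_ofPred_eq] at hmreturn
    linarith [norm_add_le (Φ (id ^ m)⁻¹ - h) (b₀ - (y - h)),
      hb₀y.trans_le (min_le_left (ε / 2) _)]
  obtain ⟨L, hL⟩ := exists_syndeticWith_pow_mem_of_mem_nhds_inv_pow id m hhit
  refine ⟨(T ^ m) b₀, pow_apply_mem_unimodularEigenspan m hb₀mem, L, ?_, ?_⟩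
  · simpa only [← mul_apply_eq_comp, ← pow_add, add_comm _ m] using hm
  · simpa only [Set.mem_ofPred_eq, ← pow_add, hΦ, hΨ, map_add, ← mul_apply_eq_comp] using hL

lemma exists_seq_syndeticWith_norm_pow_apply_sum_sub_lt (hT : meanNullApproximable T = ⊤)
    (y : ℕ → X) {ε : ℕ → ℝ} (hε : ∀ k, 0 < ε k) :
    ∃ (b : ℕ → X) (d : ℕ → ℝ) (L : ℕ → ℕ),
      (∀ k (N : ℕ), ∑ n ∈ Finset.range N, ‖(T ^ n) (b k)‖ ≤ d k * N) ∧
      (∀ k, SyndeticWith (L k) {n | ‖(T ^ n) (∑ l ∈ Finset.range (k + 1), b l) - y k‖ < ε k}) ∧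
      (∀ k, 0 < d k) ∧ (∀ k, d (k + 1) ≤ 1 / 2 * d k) ∧ ∀ k, d (k + 1) ≤ ε k / (4 * (L k + 1)) := by
  choose b hb L hmean hsynd using fun (k : ℕ) (h : unimodularEigenspan T) (δ : Set.Ioi (0 : ℝ)) ↦
    exists_syndeticWith_norm_pow_apply_add_sub_lt hT h.2 (y k) δ.2 (hε k)
  let state : ℕ → unimodularEigenspan T × Set.Ioi (0 : ℝ) := fun k ↦
    Nat.rec (0, ⟨1, Set.mem_Ioi.2 one_pos⟩) (fun k s ↦ (s.1 + ⟨b k s.1 s.2, hb k s.1 s.2⟩,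
      ⟨min (1 / 2 * s.2) (ε k / (4 * (L k s.1 s.2 + 1))),
        lt_min (mul_pos one_half_pos s.2.2) (div_pos (hε k) (by positivity))⟩)) k
  have hsum : ∀ k, ∑ l ∈ Finset.range k, b l (state l).1 (state l).2 = (state k).1 := by
    intro k
    induction k with
    | zero => simp [state]
    | succ k ih => rw [Finset.sum_range_succ, ih]; rfl
  refine ⟨fun k ↦ b k (state k).1 (state k).2, fun k ↦ (state k).2,
    fun k ↦ L k (state k).1 (state k).2, fun k ↦ hmean k _ _, fun k ↦ ?_, fun k ↦ (state k).2.2,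
    fun k ↦ min_le_left _ _, fun k ↦ min_le_right _ _⟩
  rw [Finset.sum_range_succ, hsum]
  exact hsynd k _ _

lemma summable_and_sum_norm_pow_apply_tsum_le [CompleteSpace X] {b : ℕ → X} {d : ℕ → ℝ}
    (hmean : ∀ k (N : ℕ), ∑ n ∈ Finset.range N, ‖(T ^ n) (b k)‖ ≤ d k * N) (hd : Summable d) :
    Summable b ∧ ∀ N : ℕ, ∑ n ∈ Finset.range N, ‖(T ^ n) (∑' k, b k)‖ ≤ (∑' k, d k) * N := by
  have hb : ∀ n, Summable fun k ↦ ‖(T ^ n) (b k)‖ := fun n ↦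
    .of_nonneg_of_le (fun k ↦ norm_nonneg _)
      (fun k ↦ (Finset.single_le_sum (f := fun n ↦ ‖(T ^ n) (b k)‖) (fun i _ ↦ norm_nonneg _)
        (Finset.self_mem_range_succ n)).trans (hmean k (n + 1))) (hd.mul_right _)
  have hbsum : Summable b := .of_norm (by simpa using hb 0)
  refine ⟨hbsum, fun N ↦ ?_⟩
  calc ∑ n ∈ Finset.range N, ‖(T ^ n) (∑' k, b k)‖
      ≤ ∑ n ∈ Finset.range N, ∑' k, ‖(T ^ n) (b k)‖ := Finset.sum_le_sum fun n _ ↦ by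
        rw [(T ^ n).map_tsum hbsum]
        exact norm_tsum_le_tsum_norm (hb n)
    _ = ∑' k, ∑ n ∈ Finset.range N, ‖(T ^ n) (b k)‖ :=
        (Summable.tsum_finsetSum fun n _ ↦ hb n).symm
    _ ≤ ∑' k, d k * N :=
        (summable_sum fun n _ ↦ hb n).tsum_le_tsum (fun k ↦ hmean k N) (hd.mul_right _)
    _ = (∑' k, d k) * N := tsum_mul_right

lemma exists_forall_lowerDensity_norm_pow_apply_sub_lt_pos [CompleteSpace X]
    (hT : meanNullApproximable T = ⊤) (y : ℕ → X) {r : ℕ → ℝ} (hr : ∀ k, 0 < r k) :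
    ∃ x : X, ∀ k, 0 < lowerDensity {n | ‖(T ^ n) x - y k‖ < r k} := by
  obtain ⟨b, d, L, hmean, hsynd, hd, hhalf, hdL⟩ :=
    exists_seq_syndeticWith_norm_pow_apply_sum_sub_lt hT y fun k ↦ half_pos (hr k)
  have hdsum := (summable_and_tsum_le_two_mul_of_le_half (fun k ↦ (hd k).le) hhalf).1
  have hbsum := (summable_and_sum_norm_pow_apply_tsum_le hmean hdsum).1
  refine ⟨∑' k, b k, fun k ↦ ?_⟩
  have htail := summable_and_tsum_le_two_mul_of_le_half (fun l ↦ (hd (l + (k + 1))).le)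
    fun l ↦ by simpa only [add_right_comm l 1] using hhalf (l + (k + 1))
  have htailmean := (summable_and_sum_norm_pow_apply_tsum_le
    (fun l ↦ hmean (l + (k + 1))) htail.1).2
  have hsmall : (∑' l, d (l + (k + 1))) * (L k + 1) < r k / 2 := by
    have hbound := (le_div_iff₀ (by positivity)).1 (hdL k)
    have htwo := htail.2
    rw [zero_add] at htwo
    calc (∑' l, d (l + (k + 1))) * (L k + 1) ≤ 2 * d (k + 1) * (L k + 1) := by gcongr
      _ < r k / 2 := by linarith [hr k]
  refine ((hsynd k).lowerDensity_sep_pos (fun n ↦ norm_nonneg _) (half_pos (hr k)) hsmall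
    htailmean).trans_le (lowerDensity_mono fun n hn ↦ ?_)
  rw [Set.mem_ofPred_eq, ← hbsum.sum_add_tsum_nat_add (k + 1), map_add, add_sub_right_comm]
  have hpartial : ‖(T ^ n) (∑ l ∈ Finset.range (k + 1), b l) - y k‖ < r k / 2 := hn.1
  linarith [norm_add_le ((T ^ n) (∑ l ∈ Finset.range (k + 1), b l) - y k)
    ((T ^ n) (∑' l, b (l + (k + 1)))), hn.2]

lemma frequentlyHypercyclic_of_meanNullApproximable_eq_top [CompleteSpace X]
    [TopologicalSpace.SeparableSpace X] (hT : meanNullApproximable T = ⊤) :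
    FrequentlyHypercyclic T := by
  obtain ⟨x, hx⟩ := exists_forall_lowerDensity_norm_pow_apply_sub_lt_pos hT
    (fun k ↦ TopologicalSpace.denseSeq X k.unpair.1) (r := fun k ↦ 1 / (k.unpair.2 + 1))
    fun k ↦ Nat.one_div_pos_of_nat
  refine ⟨x, fun U hU hUne ↦ ?_⟩
  obtain ⟨_, hjU, j, rfl⟩ := (TopologicalSpace.denseRange_denseSeq X).inter_open_nonempty U hU hUne
  obtain ⟨ρ, hρ, hball⟩ := Metric.isOpen_iff.1 hU _ hjU
  obtain ⟨i, hi⟩ := exists_nat_one_div_lt hρ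
  refine (hx (Nat.pair j i)).trans_le (lowerDensity_mono fun n hn ↦ hball ?_)
  simp only [Nat.unpair_pair, Set.mem_ofPred_eq] at hn
  exact mem_ball_iff_norm.2 (hn.trans hi)

/-- An eigenvector outside `meanNullApproximable T` lies in a basic open set with only finitely
many eigenvalues. -/
lemma countable_unimodularEigenvalues_compl_meanNullApproximable [SecondCountableTopology X] :
    (unimodularEigenvalues T (meanNullApproximable T : Set X)ᶜ).Countable := by
  have hbasis := TopologicalSpace.isBasis_countableBasis X
  have hcountable : (⋃ O ∈ {O ∈ TopologicalSpace.countableBasis X |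
      (unimodularEigenvalues T O).Countable}, unimodularEigenvalues T O).Countable :=
    ((TopologicalSpace.countable_countableBasis X).mono fun _ hO ↦ hO.1).biUnion fun _ hO ↦ hO.2
  refine hcountable.mono fun c ⟨x, hx, hTx⟩ ↦ ?_
  obtain ⟨δ, hδ, hfin⟩ :
      ∃ δ > 0, (unimodularEigenvalues T (Metric.ball x δ)).Finite := by
    by_contra! hinf
    exact hx (mem_meanNullApproximable_of_infinite hinf)
  obtain ⟨O, hO, hxO, hOδ⟩ :=
    hbasis.exists_subset_of_mem_open (Metric.mem_ball_self hδ) Metric.isOpen_ball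
  have hOcountable : (unimodularEigenvalues T O).Countable :=
    hfin.countable.mono fun _ ↦ Exists.imp fun _ ↦ And.imp_left (@hOδ _)
  exact Set.mem_iUnion₂.2 ⟨O, ⟨hO, hOcountable⟩, x, hxO, hTx⟩

lemma meanNullApproximable_eq_top_of_perfectlySpanning [SecondCountableTopology X]
    (hT : PerfectlySpanning T) : meanNullApproximable T = ⊤ := by
  obtain ⟨σ, _, hatom, hcircle, hspan⟩ := hT
  have : NullSingletonClass σ := ⟨hatom⟩
  set Λ : Set ℂ := (↑) '' unimodularEigenvalues T (meanNullApproximable T : Set X)ᶜ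
  have hΛ : Λ.Countable := countable_unimodularEigenvalues_compl_meanNullApproximable.image _
  have hdense := hspan ({c | ‖c‖ = 1} \ Λ) Set.sdiff_subset
    ((measurableSet_eq_fun measurable_norm measurable_const).diff hΛ.measurableSet)
    (by rw [measure_sdiff_null (hΛ.measure_zero σ), hcircle])
  have hle : Submodule.span ℂ (⋃ c ∈ {c | ‖c‖ = 1} \ Λ, {x : X | T x = c • x}) ≤
      meanNullApproximable T := by
    rw [Submodule.span_le, Set.iUnion₂_subset_iff]
    rintro c ⟨hc, hcΛ⟩ x hx
    by_contra hxmean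
    exact hcΛ ⟨⟨c, mem_sphere_zero_iff_norm.2 hc⟩, ⟨x, hxmean, hx⟩, rfl⟩
  exact SetLike.coe_injective
    (isClosed_meanNullApproximable.closure_eq.symm.trans (hdense.mono hle).closure_eq)

theorem frequentlyHypercyclic_of_perfectlySpanning [CompleteSpace X]
    [TopologicalSpace.SeparableSpace X] (hT : PerfectlySpanning T) :
    FrequentlyHypercyclic T := by
  have : SecondCountableTopology X := UniformSpace.secondCountable_of_separable X
  exact frequentlyHypercyclic_of_meanNullApproximable_eq_top
    (meanNullApproximable_eq_top_of_perfectlySpanning hT)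

end UnimodularEigenvectors

section NowhereLocallyConstant

/-- `g` is not constant on any nonempty open set. This is what allows disjoint fibres to be split
off at every stage of a Cantor scheme. -/
def NowhereLocallyConstant {Y Z : Type*} [TopologicalSpace Y] (g : Y → Z) : Prop :=
  ∀ U : Set Y, IsOpen U → U.Nonempty → (g '' U).Nontrivial

lemma NowhereLocallyConstant.comp_subtype_val {Y Z : Type*} [TopologicalSpace Y] {g : Y → Z}
    (hg : NowhereLocallyConstant g) {O : Set Y} (hO : IsOpen O) :
    NowhereLocallyConstant (g ∘ ((↑) : O → Y)) := fun U hU hUne ↦ by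
  rw [Set.image_comp]
  exact hg _ (hO.isOpenMap_subtype_val U hU) (hUne.image _)

lemma nowhereLocallyConstant_of_denseRange {Y Z ι : Type*} [TopologicalSpace Y] {g : Y → Z}
    {y : ι → Y} (hy : DenseRange y) (hg : ∀ i, ∀ U ∈ 𝓝 (y i), ∃ n, y n ∈ U ∧ g (y n) ≠ g (y i)) :
    NowhereLocallyConstant g := fun U hU hUne ↦ by
  obtain ⟨_, hiU, i, rfl⟩ := hy.inter_open_nonempty U hU hUne
  obtain ⟨n, hnU, hne⟩ := hg i U (hU.mem_nhds hiU)
  exact ⟨g (y n), ⟨y n, hnU, rfl⟩, g (y i), ⟨y i, hiU, rfl⟩, hne⟩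

lemma exists_isClosed_mem_nhds_subset_ediam_le {Y : Type*} [PseudoMetricSpace Y] {y : Y}
    {U : Set Y} (hU : U ∈ 𝓝 y) {ε : ENNReal} (hε : ε ≠ 0) :
    ∃ D ∈ 𝓝 y, IsClosed D ∧ D ⊆ U ∧ Metric.ediam D ≤ ε := by
  obtain ⟨D, hD, hDclosed, hDsub⟩ := exists_mem_nhds_isClosed_subset
    (inter_mem hU (Metric.eball_mem_nhds y (ENNReal.half_pos hε)))
  refine ⟨D, hD, hDclosed, hDsub.trans Set.inter_subset_left, ?_⟩
  calc Metric.ediam D ≤ 2 * (ε / 2) :=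
        (Metric.ediam_mono (hDsub.trans Set.inter_subset_right)).trans Metric.ediam_eball_le
    _ = ε := ENNReal.mul_div_cancel two_ne_zero ENNReal.ofNat_ne_top

variable {Y Z : Type*} [TopologicalSpace Z] [T2Space Z] {g : Y → Z}

lemma NowhereLocallyConstant.exists_pairwise_disjoint_image [PseudoMetricSpace Y]
    (hg : NowhereLocallyConstant g) (hgc : Continuous g) {C : Set Y} (hC : (interior C).Nonempty)
    {ε : ENNReal} (hε : ε ≠ 0) :
    ∃ D : Bool → Set Y, (∀ a, IsClosed (D a) ∧ (interior (D a)).Nonempty ∧ D a ⊆ C ∧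
      Metric.ediam (D a) ≤ ε) ∧ Pairwise fun a b ↦ Disjoint (g '' D a) (g '' D b) := by
  have hshrink : ∀ y ∈ interior C, ∀ V ∈ 𝓝 (g y), ∃ D, (IsClosed D ∧ (interior D).Nonempty ∧
      D ⊆ C ∧ Metric.ediam D ≤ ε) ∧ g '' D ⊆ V := fun y hy V hV ↦ by
    obtain ⟨D, hD, hDclosed, hDsub, hDdiam⟩ := exists_isClosed_mem_nhds_subset_ediam_le
      (inter_mem (mem_interior_iff_mem_nhds.1 hy) (hgc.continuousAt hV)) hε
    exact ⟨D, ⟨hDclosed, ⟨y, mem_interior_iff_mem_nhds.2 hD⟩, hDsub.trans Set.inter_subset_left,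
      hDdiam⟩, Set.image_subset_iff.2 (hDsub.trans Set.inter_subset_right)⟩
  obtain ⟨_, ⟨y₀, hy₀, rfl⟩, _, ⟨y₁, hy₁, rfl⟩, hne⟩ := hg _ isOpen_interior hC
  obtain ⟨V₀, V₁, hV₀, hV₁, hV⟩ := t2_separation_nhds hne
  obtain ⟨D₀, hD₀, hDV₀⟩ := hshrink y₀ hy₀ V₀ hV₀
  obtain ⟨D₁, hD₁, hDV₁⟩ := hshrink y₁ hy₁ V₁ hV₁
  have hdisj : Disjoint (g '' D₀) (g '' D₁) := hV.mono hDV₀ hDV₁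
  refine ⟨fun a ↦ bif a then D₁ else D₀, Bool.forall_bool.2 ⟨hD₀, hD₁⟩, ?_⟩
  rintro (_ | _) (_ | _) hab
  exacts [absurd rfl hab, hdisj, hdisj.symm, absurd rfl hab]

lemma NowhereLocallyConstant.exists_cantorScheme [PseudoMetricSpace Y] [Nonempty Y]
    (hg : NowhereLocallyConstant g) (hgc : Continuous g) :
    ∃ A : List Bool → Set Y, (∀ l, IsClosed (A l) ∧ (A l).Nonempty) ∧ CantorScheme.Antitone A ∧
      CantorScheme.VanishingDiam A ∧ CantorScheme.Disjoint fun l ↦ g '' A l := by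
  obtain ⟨ε, -, hε, hεlim⟩ := exists_seq_strictAnti_tendsto' (zero_lt_one' ENNReal)
  choose D hD hdisj using fun (C : {C : Set Y // IsClosed C ∧ (interior C).Nonempty}) (n : ℕ) ↦
    hg.exists_pairwise_disjoint_image hgc C.2.2 (hε n).1.ne'
  let A : List Bool → {C : Set Y // IsClosed C ∧ (interior C).Nonempty} := fun l ↦
    List.rec ⟨Set.univ, isClosed_univ, by simp⟩
      (fun a l C ↦ ⟨D C l.length a, (hD C l.length a).1, (hD C l.length a).2.1⟩) l
  refine ⟨fun l ↦ (A l).1, fun l ↦ ⟨(A l).2.1, (A l).2.2.mono interior_subset⟩,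
    fun l a ↦ (hD _ _ a).2.2.1, fun x ↦ ?_, fun l ↦ hdisj (A l) l.length⟩
  rw [← tendsto_add_atTop_iff_nat 1]
  refine tendsto_of_tendsto_of_tendsto_of_le_of_le tendsto_const_nhds hεlim (fun n ↦ zero_le)
    fun n ↦ ?_
  have hdiam := (hD (A (PiNat.res x n)) (PiNat.res x n).length (x n)).2.2.2
  rw [PiNat.res_length] at hdiam
  simpa only [A, PiNat.res_succ, PiNat.res_length] using hdiam

lemma NowhereLocallyConstant.exists_continuous_injective_comp [TopologicalSpace Y]
    [TopologicalSpace.IsCompletelyMetrizableSpace Y] [Nonempty Y] (hg : NowhereLocallyConstant g)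
    (hgc : Continuous g) :
    ∃ f : (ℕ → Bool) → Y, Continuous f ∧ Function.Injective (g ∘ f) := by
  let := TopologicalSpace.upgradeIsCompletelyMetrizable Y
  obtain ⟨A, hA, hanti, hdiam, hdisj⟩ := hg.exists_cantorScheme hgc
  have hdom : ∀ x, x ∈ (CantorScheme.inducedMap A).1 := fun x ↦ by
    rw [(hanti.closureAntitone fun l ↦ (hA l).1).map_of_vanishingDiam hdiam fun l ↦ (hA l).2]
    exact Set.mem_univ x
  refine ⟨fun x ↦ (CantorScheme.inducedMap A).2 ⟨x, hdom x⟩,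
    hdiam.map_continuous.comp (by fun_prop), fun x y hxy ↦ ?_⟩
  have hmem : ∀ z n, g ((CantorScheme.inducedMap A).2 ⟨z, hdom z⟩) ∈ g '' A (PiNat.res z n) :=
    fun z n ↦ Set.mem_image_of_mem g (CantorScheme.map_mem ⟨z, hdom z⟩ n)
  have hres : ∀ n, PiNat.res x n = PiNat.res y n := fun n ↦ by
    induction n with
    | zero => rfl
    | succ n ih =>
      have hx := hmem x (n + 1)
      have hy := hmem y (n + 1)
      rw [PiNat.res_succ] at hx hy
      rw [← ih, ← show g _ = g _ from hxy] at hy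
      rw [PiNat.res_succ, PiNat.res_succ, ih]
      congr 1
      by_contra hne
      exact Set.disjoint_left.1 (hdisj _ hne) hx hy
  exact PiNat.res_injective (funext hres)

variable [TopologicalSpace Y] [PolishSpace Y] [MeasurableSpace Y] [BorelSpace Y]

lemma NowhereLocallyConstant.exists_isProbabilityMeasure [Nonempty Y]
    (hg : NowhereLocallyConstant g) (hgc : Continuous g) :
    ∃ μ : Measure Y, IsProbabilityMeasure μ ∧ ∀ z, μ (g ⁻¹' {z}) = 0 := by
  obtain ⟨f, hf, hinj⟩ := hg.exists_continuous_injective_comp hgc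
  let e : ℝ ≃ᵐ (ℕ → Bool) := PolishSpace.measurableEquivNatBoolOfNotCountable
    (not_countable_iff.2 inferInstance)
  have hmeas : Measurable (f ∘ e) := hf.measurable.comp e.measurable
  have : IsProbabilityMeasure (volume.restrict (Set.Icc (0 : ℝ) 1)) := ⟨by simp⟩
  refine ⟨(volume.restrict (Set.Icc 0 1)).map (f ∘ e),
    Measure.isProbabilityMeasure_map hmeas.aemeasurable, fun z ↦ ?_⟩
  rw [Measure.map_apply hmeas (isClosed_singleton.preimage hgc).measurableSet]
  exact Set.Subsingleton.measure_zero
    (fun s hs t ht ↦ (hinj.comp e.injective) (hs.trans ht.symm)) _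

lemma NowhereLocallyConstant.exists_measure_ne_zero (hg : NowhereLocallyConstant g)
    (hgc : Continuous g) {O : Set Y} (hO : IsOpen O) (hOne : O.Nonempty) :
    ∃ μ : Measure Y, IsProbabilityMeasure μ ∧ μ O ≠ 0 ∧ ∀ z, μ (g ⁻¹' {z}) = 0 := by
  have := hO.polishSpace
  have := hOne.to_subtype
  obtain ⟨μ, _, hμ⟩ :=
    (hg.comp_subtype_val hO).exists_isProbabilityMeasure (hgc.comp continuous_subtype_val)
  refine ⟨μ.map (↑), Measure.isProbabilityMeasure_map measurable_subtype_coe.aemeasurable, ?_,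
    fun z ↦ ?_⟩
  · simp [Measure.map_apply measurable_subtype_coe hO.measurableSet]
  · rw [Measure.map_apply measurable_subtype_coe (isClosed_singleton.preimage hgc).measurableSet]
    exact hμ z

lemma NowhereLocallyConstant.exists_isOpenPosMeasure [Nonempty Y]
    (hg : NowhereLocallyConstant g) (hgc : Continuous g) :
    ∃ μ : Measure Y, IsProbabilityMeasure μ ∧ μ.IsOpenPosMeasure ∧ ∀ z, μ (g ⁻¹' {z}) = 0 := by
  have hbasis := TopologicalSpace.isBasis_countableBasis Y
  choose μ hprob hpos hnull using fun O : TopologicalSpace.countableBasis Y ↦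
    hg.exists_measure_ne_zero hgc (hbasis.isOpen O.2)
      (TopologicalSpace.nonempty_of_mem_countableBasis O.2)
  have : Countable (TopologicalSpace.countableBasis Y) :=
    TopologicalSpace.countable_countableBasis Y
  have hopen : (Measure.sum μ).IsOpenPosMeasure := by
    refine ⟨fun U hU ⟨y, hy⟩ hzero ↦ ?_⟩
    obtain ⟨O, hO, -, hOU⟩ := hbasis.exists_subset_of_mem_open hy hU
    rw [Measure.sum_apply_eq_zero] at hzero
    exact hpos ⟨O, hO⟩ (measure_mono_null hOU (hzero _))
  refine ⟨(Measure.sum μ).toFinite, inferInstance, ?_, fun z ↦ ?_⟩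
  · exact (absolutelyContinuous_toFinite _).isOpenPosMeasure
  · exact toFinite_absolutelyContinuous _ (Measure.sum_apply_eq_zero.2 fun O ↦ hnull O z)

end NowhereLocallyConstant

section PerfectlySpanning

variable {X : Type*} [NormedAddCommGroup X] [NormedSpace ℂ X] {T : X →L[ℂ] X}

lemma perfectlySpanning_of_continuous_eigenvectorField {Y : Type*} [TopologicalSpace Y]
    [PolishSpace Y] [Nonempty Y] {v : Y → X} {g : Y → ℂ} (hv : Continuous v) (hgc : Continuous g)
    (hg : NowhereLocallyConstant g) (hnorm : ∀ y, ‖g y‖ = 1) (hT : ∀ y, T (v y) = g y • v y)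
    (hspan : Dense (Submodule.span ℂ (Set.range v) : Set X)) : PerfectlySpanning T := by
  borelize Y
  obtain ⟨μ, _, _, hnull⟩ := hg.exists_isOpenPosMeasure hgc
  have hmeas : Measurable g := hgc.measurable
  refine ⟨μ.map g, Measure.isProbabilityMeasure_map hmeas.aemeasurable, fun c ↦ ?_, ?_,
    fun A _ hA hσA ↦ ?_⟩
  · rw [Measure.map_apply hmeas (measurableSet_singleton c), hnull]
  · rw [Measure.map_apply hmeas (measurableSet_eq_fun measurable_norm measurable_const)]
    simp [hnorm]
  · rw [Measure.map_apply hmeas hA] at hσA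
    have hdense : Dense (g ⁻¹' A) :=
      Measure.dense_of_ae ((prob_compl_eq_zero_iff (hmeas hA)).2 hσA)
    set W := Submodule.span ℂ (⋃ c ∈ A, {x : X | T x = c • x})
    have hmem : g ⁻¹' A ⊆ v ⁻¹' W.topologicalClosure := fun y hy ↦
      W.le_topologicalClosure (Submodule.subset_span (Set.mem_iUnion₂.2 ⟨g y, hy, hT y⟩))
    have hle : Submodule.span ℂ (Set.range v) ≤ W.topologicalClosure := by
      rw [Submodule.span_le, Set.range_subset_iff]
      exact fun y ↦ closure_minimal hmem
        (W.isClosed_topologicalClosure.preimage hv) (hdense y)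
    exact dense_closure.1 (hspan.mono hle)

lemma isClosed_setOf_exists_mem_apply_eq_smul {F : Set Circle} (hF : IsClosed F) :
    IsClosed {x | ∃ c ∈ F, T x = (c : ℂ) • x} := by
  have hclosed : IsClosed {p : X × Circle | p.2 ∈ F ∧ T p.1 = (p.2 : ℂ) • p.1} :=
    (hF.preimage continuous_snd).inter (isClosed_eq (by fun_prop) (by fun_prop))
  convert! isClosedMap_fst_of_compactSpace _ hclosed
  ext x
  simp

lemma eq_of_apply_eq_smul {x : X} (hx : x ≠ 0) {c d : Circle} (hc : T x = (c : ℂ) • x)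
    (hd : T x = (d : ℂ) • x) : c = d :=
  Circle.ext (smul_left_injective ℂ hx (hc.symm.trans hd))

lemma continuous_of_apply_eq_smul {Y : Type*} [TopologicalSpace Y] {v : Y → X}
    (hv : Continuous v) (hne : ∀ y, v y ≠ 0) {g : Y → Circle}
    (hg : ∀ y, T (v y) = (g y : ℂ) • v y) : Continuous g := by
  refine continuous_iff_isClosed.2 fun F hF ↦ ?_
  convert! (isClosed_setOf_exists_mem_apply_eq_smul (T := T) hF).preimage hv
  ext y
  refine ⟨fun hy ↦ ⟨g y, hy, hg y⟩, ?_⟩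
  rintro ⟨c, hc, hTc⟩
  rwa [Set.mem_preimage, eq_of_apply_eq_smul (hne y) (hg y) hTc]

lemma perfectlySpanning_of_approximable [CompleteSpace X] [TopologicalSpace.SeparableSpace X]
    {ι : Type*} [Nonempty ι] {u : ι → X} {lam : ι → Circle} (hu : ∀ i, u i ≠ 0)
    (hT : ∀ i, T (u i) = (lam i : ℂ) • u i)
    (hspan : Dense (Submodule.span ℂ (Set.range u) : Set X))
    (happrox : ∀ i, ∀ ε > (0 : ℝ), ∃ n, lam n ≠ lam i ∧ ‖u n - u i‖ < ε) :
    PerfectlySpanning T := by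
  have : SecondCountableTopology X := UniformSpace.secondCountable_of_separable X
  have := (isClosed_closure (s := Set.range u)).polishSpace
  let Y := {y : closure (Set.range u) // (y : X) ≠ 0}
  have : PolishSpace Y :=
    IsOpen.polishSpace (isOpen_compl_singleton.preimage continuous_subtype_val)
  let y : ι → Y := fun i ↦ ⟨⟨u i, subset_closure ⟨i, rfl⟩⟩, hu i⟩
  have : Nonempty Y := ‹Nonempty ι›.map y
  have hclosure : closure (Set.range u) ⊆ {x | ∃ c ∈ Set.univ, T x = ((c : Circle) : ℂ) • x} :=
    closure_minimal (Set.range_subset_iff.2 fun i ↦ ⟨lam i, Set.mem_univ _, hT i⟩)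
      (isClosed_setOf_exists_mem_apply_eq_smul isClosed_univ)
  choose g _ hg using fun y : Y ↦ hclosure y.1.2
  have hv : Continuous fun z : Y ↦ (z.1 : X) := continuous_subtype_val.comp continuous_subtype_val
  have hgc : Continuous g := continuous_of_apply_eq_smul hv (fun z ↦ z.2) hg
  have hgu : ∀ i, g (y i) = lam i := fun i ↦ eq_of_apply_eq_smul (hu i) (hg (y i)) (hT i)
  have hdense : DenseRange y := by
    refine dense_iff_inter_open.2 fun U hU ⟨z, hz⟩ ↦ ?_
    obtain ⟨V, hV, rfl⟩ := isOpen_induced_iff.1 hU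
    obtain ⟨W, hW, rfl⟩ := isOpen_induced_iff.1 hV
    obtain ⟨_, hiW, i, rfl⟩ := mem_closure_iff.1 z.1.2 W hW hz
    exact ⟨y i, hiW, i, rfl⟩
  have hgnlc : NowhereLocallyConstant fun z ↦ (g z : ℂ) := by
    refine nowhereLocallyConstant_of_denseRange hdense fun i U hU ↦ ?_
    obtain ⟨ε, hε, hball⟩ := Metric.mem_nhds_iff.1 hU
    obtain ⟨n, hne, hn⟩ := happrox i ε hε
    exact ⟨n, hball (mem_ball_iff_norm.2 hn), by rwa [hgu, hgu, Circle.coe_inj.ne]⟩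
  exact perfectlySpanning_of_continuous_eigenvectorField hv (by fun_prop) hgnlc
    (fun z ↦ Circle.norm_coe _) hg
    (hspan.mono (Submodule.span_mono (Set.range_subset_iff.2 fun i ↦ ⟨y i, rfl⟩)))

end PerfectlySpanning

theorem approximable_eigenvector_sequence_implies_perfectlySpanning_general
    {X : Type*} [NormedAddCommGroup X] [NormedSpace ℂ X] [CompleteSpace X]
    [TopologicalSpace.SeparableSpace X] {ι : Type*} [Nonempty ι]
    (T : X →L[ℂ] X) (u : ι → X) (lam : ι → ℂ)
    (hu : ∀ i, u i ≠ 0) (hT : ∀ i, T (u i) = lam i • u i) (hlam : ∀ i, ‖lam i‖ = 1)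
    (hspan : Dense (Submodule.span ℂ (Set.range u) : Set X))
    (happrox : ∀ i, ∀ ε > (0 : ℝ), ∃ n, lam n ≠ lam i ∧ ‖u n - u i‖ < ε) :
    PerfectlySpanning T ∧ FrequentlyHypercyclic T := by
  have hspanning : PerfectlySpanning T :=
    perfectlySpanning_of_approximable (lam := fun i ↦ ⟨lam i, mem_sphere_zero_iff_norm.2 (hlam i)⟩)
      hu hT hspan fun i ε hε ↦
        (happrox i ε hε).imp fun n hn ↦ ⟨fun h ↦ hn.1 (congrArg Subtype.val h), hn.2⟩
  exact ⟨hspanning, frequentlyHypercyclic_of_perfectlySpanning hspanning⟩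

/-- Suppose `(u i)` is a sequence of unimodular eigenvectors of `T` with pairwise
distinct eigenvalues, spanning a dense subspace, and such that every `u i` can be
approximated arbitrarily well by other terms of the sequence. Then `T` has a
perfectly spanning set of unimodular eigenvectors, and hence `T` is frequently
hypercyclic. -/
theorem approximable_eigenvector_sequence_implies_perfectlySpanning
    {X : Type*} [NormedAddCommGroup X] [NormedSpace ℂ X] [CompleteSpace X]
    [TopologicalSpace.SeparableSpace X] (hdim : ¬ FiniteDimensional ℂ X)
    (T : X →L[ℂ] X) (u : ℕ → X) (lam : ℕ → ℂ)
    (ha1 : ∀ i, u i ≠ 0) (ha2 : ∀ i, T (u i) = lam i • u i)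
    (ha3 : ∀ i, ‖lam i‖ = 1) (ha4 : Function.Injective lam)
    (hb : Dense (Submodule.span ℂ (Set.range u) : Set X))
    (hc : ∀ i, ∀ ε > (0 : ℝ), ∃ n, n ≠ i ∧ ‖u n - u i‖ < ε) :
    PerfectlySpanning T ∧ FrequentlyHypercyclic T := by
  exact approximable_eigenvector_sequence_implies_perfectlySpanning_general T u lam ha1 ha2 ha3 hb
    fun i ε hε ↦ (hc i ε hε).imp fun n hn ↦ ⟨ha4.ne hn.1, hn.2⟩
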